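/- Let φ = (−e^{−πi/9}|0⟩ + e^{πi/9}|2⟩)/√2 ∈ ℂ³, let R_φ = I − 2|φ⟩⟨φ| be the Householder reflection about φ, and let τ = |2⟩⟨0| + |1⟩⟨1| + |0⟩⟨2| be the permutation operator exchanging |0⟩ and |2⟩. Then R_φ·τ = P₉, where P₉ = e^{−2πi/9}|0⟩⟨0| + |1⟩⟨1| + e^{2πi/9}|2⟩⟨2|. In particular, P₉ is the product of a basis transposition and a two-level Householder reflection. -/

import Mathlib

/-! With `a = e^{πi/9}` and `b = e^{−πi/9} = a⁻¹ = conj a`, the operator `2|φ⟩⟨φ|` has diagonal entries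
`1` and off-diagonal entries `−b²`, `−a²` on the span of `|0⟩, |2⟩`. Hence `R_φ` is antidiagonal there, with
entries `b² = e^{−2πi/9}` and `a² = e^{2πi/9}`, and multiplying by `τ` moves these onto the diagonal. -/

open Matrix

/-- The state `φ = (−e^{−πi/9}|0⟩ + e^{πi/9}|2⟩)/√2`. -/
noncomputable def phiVec : Fin 3 → ℂ :=
  ((Real.sqrt 2 : ℂ))⁻¹ •
    ![-Complex.exp (-(Real.pi : ℂ) * Complex.I / 9), 0,
      Complex.exp ((Real.pi : ℂ) * Complex.I / 9)]

/-- The Householder reflection `R_φ = I − 2|φ⟩⟨φ|` as a matrix. -/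
noncomputable def Rphi : Matrix (Fin 3) (Fin 3) ℂ :=
  1 - (2 : ℂ) • Matrix.vecMulVec phiVec (star phiVec)

/-- The transposition `τ = |2⟩⟨0| + |1⟩⟨1| + |0⟩⟨2|` exchanging `|0⟩` and `|2⟩`. -/
def tau02 : Matrix (Fin 3) (Fin 3) ℂ :=
  ![![0, 0, 1], ![0, 1, 0], ![1, 0, 0]]

/-- The diagonal gate `P₉ = e^{−2πi/9}|0⟩⟨0| + |1⟩⟨1| + e^{2πi/9}|2⟩⟨2|`. -/
noncomputable def P9 : Matrix (Fin 3) (Fin 3) ℂ :=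
  Matrix.diagonal
    ![Complex.exp (-(2 * (Real.pi : ℂ) * Complex.I) / 9), 1,
      Complex.exp (2 * (Real.pi : ℂ) * Complex.I / 9)]

/-- `R_φ·τ = P₉`: the `P₉` gate is the product of a basis transposition and
the two-level Householder reflection about `φ`. -/
theorem Rphi_mul_tau_eq_P9 : Rphi * tau02 = P9 := by
  have hs : ((Real.sqrt 2 : ℂ))⁻¹ * ((Real.sqrt 2 : ℂ))⁻¹ = 1 / 2 := by
    rw [← mul_inv, ← Complex.ofReal_mul, Real.mul_self_sqrt (by norm_num)]
    norm_num
  have hab : Complex.exp (-(Real.pi : ℂ) * Complex.I / 9)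
      * Complex.exp ((Real.pi : ℂ) * Complex.I / 9) = 1 := by
    rw [← Complex.exp_add, ← Complex.exp_zero]
    congr 1
    ring
  have hsa : (starRingEnd ℂ) (Complex.exp ((Real.pi : ℂ) * Complex.I / 9))
      = Complex.exp (-(Real.pi : ℂ) * Complex.I / 9) := by
    rw [← Complex.exp_conj]
    simp [Complex.conj_ofNat]
  have hsb : (starRingEnd ℂ) (Complex.exp (-(Real.pi : ℂ) * Complex.I / 9))
      = Complex.exp ((Real.pi : ℂ) * Complex.I / 9) := by
    rw [← hsa, Complex.conj_conj]
  have ha2 : Complex.exp (2 * (Real.pi : ℂ) * Complex.I / 9)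
      = Complex.exp ((Real.pi : ℂ) * Complex.I / 9) ^ 2 := by
    rw [← Complex.exp_nat_mul]
    congr 1
    push_cast
    ring
  have hb2 : Complex.exp (-(2 * (Real.pi : ℂ) * Complex.I) / 9)
      = Complex.exp (-(Real.pi : ℂ) * Complex.I / 9) ^ 2 := by
    rw [← Complex.exp_nat_mul]
    congr 1
    push_cast
    ring
  have hsr : (starRingEnd ℂ) ((Real.sqrt 2 : ℂ))⁻¹ = ((Real.sqrt 2 : ℂ))⁻¹ := by
    rw [map_inv₀, Complex.conj_ofReal]
  -- `tau02` is a bare vector of vectors; restating it through `Matrix.of` keeps matrix lemmas applicable.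
  have ht : tau02 = !![0, 0, 1; 0, 1, 0; 1, 0, 0] := rfl
  rw [ht]
  unfold Rphi P9 phiVec
  rw [ha2, hb2]
  -- Only `b * a = 1`, `s * s = 1 / 2` and the conjugation rules matter from here on.
  generalize Complex.exp ((Real.pi : ℂ) * Complex.I / 9) = a at *
  generalize Complex.exp (-(Real.pi : ℂ) * Complex.I / 9) = b at *
  generalize ((Real.sqrt 2 : ℂ))⁻¹ = s at *
  ext i j
  simp only [Matrix.mul_apply, Fin.sum_univ_three, Matrix.sub_apply, Matrix.smul_apply,
    Matrix.vecMulVec_apply, Pi.star_apply, Pi.smul_apply]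
  fin_cases i <;> fin_cases j <;>
    simp [Matrix.one_apply, hsa, hsb, hsr] <;>
    grind
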